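/- Assume ‖β*‖_∞ ≤ B for some B > 0, λ₁ = 8B·λ₂, and ε_n ≥ 0. Let Σ = ∫ x·xᵀ dQ(x,y) and suppose: (i) (P_n − P)(l₁(β*,·,·) − l₁(β̂,·,·)) ≤ (λ₁/4)·‖β̂ − β*‖₁ and (P_n − P)(l₂(β*,·) − l₂(β̂,·)) ≤ (λ₁/4)·(‖β̂ − β*‖₁ + ε_n); (ii) there is a > 0 with P l(β̂,·,·) − P l(β*,·,·) ≥ a·(β̂ − β*)ᵀ·Σ·(β̂ − β*); (iii) the Stabil condition holds: for every b ∈ ℝ^p with ∑_{j∉H}|b_j| ≤ 3.5·∑_{j∈H}|b_j| + ε_n/2 one has bᵀ·Σ·b ≥ k·∑_{j∈H} b_j² − ε_n/2, where 0 < k < 1. Then the prediction error satisfies (β̂ − β*)ᵀ·Σ·(β̂ − β*) ≤ 17.71875·d*·λ₁² / (a·(a·k + 2λ₂)) + (4.5·λ₁/a + 3.5)·ε_n. -/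

import Mathlib

open Real BigOperators Finset MeasureTheory

/-- Inner product. -/
def dotp {p : ℕ} (u v : Fin p → ℝ) : ℝ := ∑ j, u j * v j

/-- Negative binomial loss `l(β,x,y)`. -/
noncomputable def nbLoss (p : ℕ) (θ : ℝ) (β x : Fin p → ℝ) (y : ℝ) : ℝ :=
  -y * dotp x β + (θ + y) * Real.log (θ + Real.exp (dotp x β))

/-- First part `l₁(β,x,y)` of the loss. -/
noncomputable def nbLoss1 (p : ℕ) (θ : ℝ) (β x : Fin p → ℝ) (y : ℝ) : ℝ :=
  -y * (dotp x β - Real.log (θ + Real.exp (dotp x β)))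

/-- Second part `l₂(β,x)` of the loss. -/
noncomputable def nbLoss2 (p : ℕ) (θ : ℝ) (β x : Fin p → ℝ) : ℝ :=
  θ * Real.log (θ + Real.exp (dotp x β))

/-! If `γ` minimises the penalised empirical risk, comparing it with `β` turns the excess risk of
`γ` into an empirical process term plus a difference of penalties. The penalty charges `γ - β` at
rate `lam₁` off the support `H` of `β`, and the empirical process takes back only half of that, so
`γ - β` lies in the cone where the Stabil condition holds. There the quadratic error controls
`∑ j ∈ H, (γ j - β j) ^ 2`; together with the `ℓ²` gain of the ridge penalty this absorbs the
remaining `ℓ¹` term on `H` by Young's inequality. -/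

section SupportSums

variable {ι : Type*}

lemma mul_sum_abs_le_mul_sum_sq_add (s : Finset ι) (u : ι → ℝ) (t : ℝ) {c : ℝ} (hc : 0 < c) :
    t * ∑ j ∈ s, |u j| ≤ c * ∑ j ∈ s, u j ^ 2 + #s * (t ^ 2 / (4 * c)) := by
  have young (x : ℝ) : t * |x| ≤ c * x ^ 2 + t ^ 2 / (4 * c) := by
    have hsq : c * |x| ^ 2 + t ^ 2 / (4 * c) - t * |x| = (2 * c * |x| - t) ^ 2 / (4 * c) := by
      field_simp
      ring
    have hnonneg : 0 ≤ (2 * c * |x| - t) ^ 2 / (4 * c) := by positivity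
    rw [sq_abs] at hsq
    linarith
  calc t * ∑ j ∈ s, |u j| = ∑ j ∈ s, t * |u j| := mul_sum s _ t
    _ ≤ ∑ j ∈ s, (c * u j ^ 2 + t ^ 2 / (4 * c)) := sum_le_sum fun j _ => young (u j)
    _ = c * ∑ j ∈ s, u j ^ 2 + #s * (t ^ 2 / (4 * c)) := by
      rw [sum_add_distrib, ← mul_sum, sum_const, nsmul_eq_mul]

variable [Fintype ι] [DecidableEq ι]

/-- The Stabil condition of high-dimensional regression for an error functional `V` (in applications
`V b = bᵀ Σ b`): `V` is bounded below by `k ∑_{j ∈ H} b_j²`, up to the slack `δ`, on the cone of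
vectors whose `ℓ¹` mass off `H` is at most `c` times the mass on `H`, up to the same slack. -/
def Stabil (V : (ι → ℝ) → ℝ) (H : Finset ι) (c k δ : ℝ) : Prop :=
  ∀ b : ι → ℝ, ∑ j ∈ Hᶜ, |b j| ≤ c * ∑ j ∈ H, |b j| + δ → k * ∑ j ∈ H, b j ^ 2 - δ ≤ V b

theorem Stabil.mul_le_of_add_le {V : (ι → ℝ) → ℝ} {H : Finset ι} {c k δ a r D : ℝ}
    (hV : Stabil V H c k δ) {b : ι → ℝ} (hb : 0 ≤ V b) (ha : 0 ≤ a) (hr : 0 ≤ r) (hD : 0 < D)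
    (hc : 0 < a * k + 2 * r)
    (hle : a * V b + r * ∑ j ∈ H, b j ^ 2 + D * ∑ j ∈ Hᶜ, |b j| ≤ D * (c * ∑ j ∈ H, |b j| + δ)) :
    a * V b ≤ #H * ((D * c) ^ 2 / (a * k + 2 * r)) + (2 * D + a) * δ := by
  have hsq : 0 ≤ r * ∑ j ∈ H, b j ^ 2 := by positivity
  have hoff : 0 ≤ D * ∑ j ∈ Hᶜ, |b j| := by positivity
  have hcone : ∑ j ∈ Hᶜ, |b j| ≤ c * ∑ j ∈ H, |b j| + δ :=
    le_of_mul_le_mul_left (by linarith [mul_nonneg ha hb]) hD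
  have hstabil : a * (k * ∑ j ∈ H, b j ^ 2 - δ) ≤ a * V b :=
    mul_le_mul_of_nonneg_left (hV b hcone) ha
  have hyoung := mul_sum_abs_le_mul_sum_sq_add H b (2 * (D * c)) hc
  have hconst : (2 * (D * c)) ^ 2 / (4 * (a * k + 2 * r)) = (D * c) ^ 2 / (a * k + 2 * r) := by
    field_simp
    ring
  rw [hconst] at hyoung
  -- Doubling `hle` leaves one copy of `a * V b` to be spent on `hstabil`.
  linarith

end SupportSums

section ElasticNet

variable {ι : Type*} [Fintype ι]

/-- The elastic net penalty `lam₁ ‖β‖₁ + lam₂ ‖β‖₂²`. -/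
def elasticNetPenalty (lam₁ lam₂ : ℝ) (β : ι → ℝ) : ℝ :=
  lam₁ * ∑ j, |β j| + lam₂ * ∑ j, β j ^ 2

lemma lasso_add_ridge_sub_le {lam₁ lam₂ B s t : ℝ} (hlam₁ : 0 ≤ lam₁) (hlam₂ : 0 ≤ lam₂)
    (hs : |s| ≤ B) :
    lam₁ * |s| + lam₂ * s ^ 2 - (lam₁ * |t| + lam₂ * t ^ 2)
      ≤ (lam₁ + 2 * lam₂ * B) * |t - s| - lam₂ * (t - s) ^ 2 := by
  have habs : |s| - |t| ≤ |t - s| := abs_sub_comm t s ▸ abs_sub_abs_le_abs_sub s t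
  have hcross : -(s * (t - s)) ≤ B * |t - s| :=
    calc -(s * (t - s)) ≤ |s| * |t - s| := abs_mul s (t - s) ▸ neg_le_abs _
      _ ≤ B * |t - s| := by gcongr
  calc lam₁ * |s| + lam₂ * s ^ 2 - (lam₁ * |t| + lam₂ * t ^ 2)
      = lam₁ * (|s| - |t|) + 2 * lam₂ * -(s * (t - s)) - lam₂ * (t - s) ^ 2 := by ring
    _ ≤ lam₁ * |t - s| + 2 * lam₂ * (B * |t - s|) - lam₂ * (t - s) ^ 2 := by gcongr
    _ = (lam₁ + 2 * lam₂ * B) * |t - s| - lam₂ * (t - s) ^ 2 := by ring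

variable [DecidableEq ι] {H : Finset ι} {β γ : ι → ℝ} {lam₁ lam₂ B : ℝ}

lemma elasticNetPenalty_sub_le (hlam₁ : 0 ≤ lam₁) (hlam₂ : 0 ≤ lam₂)
    (hB : ∀ j ∈ H, |β j| ≤ B) (hβ : ∀ j ∉ H, β j = 0) :
    elasticNetPenalty lam₁ lam₂ β - elasticNetPenalty lam₁ lam₂ γ
      ≤ (lam₁ + 2 * lam₂ * B) * ∑ j ∈ H, |γ j - β j| - lam₂ * ∑ j ∈ H, (γ j - β j) ^ 2
        - lam₁ * ∑ j ∈ Hᶜ, |γ j - β j| := by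
  set d : ι → ℝ := fun j =>
    lam₁ * |β j| + lam₂ * β j ^ 2 - (lam₁ * |γ j| + lam₂ * γ j ^ 2) with hd
  have hon : ∑ j ∈ H, d j
      ≤ ∑ j ∈ H, ((lam₁ + 2 * lam₂ * B) * |γ j - β j| - lam₂ * (γ j - β j) ^ 2) :=
    sum_le_sum fun j hj => lasso_add_ridge_sub_le hlam₁ hlam₂ (hB j hj)
  have hoff : ∑ j ∈ Hᶜ, d j ≤ ∑ j ∈ Hᶜ, -(lam₁ * |γ j - β j|) := by
    refine sum_le_sum fun j hj => ?_
    have hsq : 0 ≤ lam₂ * γ j ^ 2 := by positivity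
    simp only [hd, hβ j (mem_compl.mp hj), abs_zero, sub_zero]
    linarith
  calc elasticNetPenalty lam₁ lam₂ β - elasticNetPenalty lam₁ lam₂ γ = ∑ j, d j := by
        simp only [elasticNetPenalty, hd, sum_sub_distrib, sum_add_distrib, ← mul_sum]
    _ = ∑ j ∈ H, d j + ∑ j ∈ Hᶜ, d j := (sum_add_sum_compl H d).symm
    _ ≤ _ := add_le_add hon hoff
    _ = _ := by
        simp only [sum_sub_distrib, sum_neg_distrib, ← mul_sum]
        ring

theorem excessRisk_add_le_of_penalized_le {Rₙ R : (ι → ℝ) → ℝ} {τ η : ℝ}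
    (hlam₁ : 0 ≤ lam₁) (hlam₂ : 0 ≤ lam₂)
    (hB : ∀ j ∈ H, |β j| ≤ B) (hβ : ∀ j ∉ H, β j = 0)
    (hmin : Rₙ γ + elasticNetPenalty lam₁ lam₂ γ ≤ Rₙ β + elasticNetPenalty lam₁ lam₂ β)
    (hproc : Rₙ β - Rₙ γ - (R β - R γ) ≤ τ * ∑ j, |γ j - β j| + η) :
    R γ - R β + lam₂ * ∑ j ∈ H, (γ j - β j) ^ 2 + (lam₁ - τ) * ∑ j ∈ Hᶜ, |γ j - β j|
      ≤ (lam₁ + 2 * lam₂ * B + τ) * ∑ j ∈ H, |γ j - β j| + η := by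
  have hpen := elasticNetPenalty_sub_le (γ := γ) hlam₁ hlam₂ hB hβ
  rw [← sum_add_sum_compl H] at hproc
  linarith

/-- The error is charged at rate at most `7/4 * lam₁` on `H` and exactly `1/2 * lam₁` off `H`: their
ratio is the cone constant `3.5`, and `3.0625 = (7/4)²`. -/
theorem elasticNet_oracle_inequality {Rₙ R V : (ι → ℝ) → ℝ} {a k ε : ℝ}
    (hlam₁ : 0 < lam₁) (hlam₂ : 0 ≤ lam₂) (hlam : 8 * B * lam₂ ≤ lam₁)
    (hB : ∀ j ∈ H, |β j| ≤ B) (hβ : ∀ j ∉ H, β j = 0)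
    (hmin : Rₙ γ + elasticNetPenalty lam₁ lam₂ γ ≤ Rₙ β + elasticNetPenalty lam₁ lam₂ β)
    (hproc : Rₙ β - Rₙ γ - (R β - R γ) ≤ lam₁ / 2 * ∑ j, |γ j - β j| + lam₁ / 4 * ε)
    (ha : 0 < a) (hmargin : a * V (γ - β) ≤ R γ - R β)
    (hV : 0 ≤ V (γ - β)) (hk : 0 < k) (hstabil : Stabil V H 3.5 k (ε / 2)) :
    V (γ - β) ≤ 3.0625 * #H * lam₁ ^ 2 / (a * (a * k + 2 * lam₂))
      + (0.5 * lam₁ / a + 0.5) * ε := by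
  have hbasic := excessRisk_add_le_of_penalized_le hlam₁.le hlam₂ hB hβ hmin hproc
  have hridge : (lam₁ + 2 * lam₂ * B + lam₁ / 2) * ∑ j ∈ H, |γ j - β j|
      ≤ 7 / 4 * lam₁ * ∑ j ∈ H, |γ j - β j| := by
    gcongr
    linarith
  have hc : 0 < a * k + 2 * lam₂ := by positivity
  have hbound := hstabil.mul_le_of_add_le hV ha.le hlam₂ (half_pos hlam₁) hc (by
    simp only [Pi.sub_apply]
    linarith)
  refine le_of_mul_le_mul_left (hbound.trans_eq ?_) ha
  field_simp
  ring

end ElasticNet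

/-- `β` is the target and `γ` the estimator; `w` plays the role of `1 / n` and `V` that of the
quadratic form `b ↦ bᵀ Σ b`. -/
theorem stmt12_general {ι κ Z : Type*} [Fintype ι] [DecidableEq ι] [Fintype κ]
    [MeasurableSpace Z] {Q : Measure Z} {w : ℝ} {z : κ → Z} {ℓ₁ ℓ₂ : (ι → ℝ) → Z → ℝ}
    {β γ : ι → ℝ} (hβ₁ : Integrable (ℓ₁ β) Q) (hγ₁ : Integrable (ℓ₁ γ) Q)
    (hβ₂ : Integrable (ℓ₂ β) Q) (hγ₂ : Integrable (ℓ₂ γ) Q)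
    {lam₁ lam₂ B : ℝ} (hlam₁ : 0 < lam₁) (hlam₂ : 0 ≤ lam₂) (hlam : 8 * B * lam₂ ≤ lam₁)
    {H : Finset ι} (hB : ∀ j ∈ H, |β j| ≤ B) (hβ : ∀ j ∉ H, β j = 0)
    (hmin : w * ∑ i, (ℓ₁ γ (z i) + ℓ₂ γ (z i)) + lam₁ * ∑ j, |γ j| + lam₂ * ∑ j, γ j ^ 2
      ≤ w * ∑ i, (ℓ₁ β (z i) + ℓ₂ β (z i)) + lam₁ * ∑ j, |β j| + lam₂ * ∑ j, β j ^ 2)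
    {ε : ℝ}
    (hproc₁ : w * ∑ i, (ℓ₁ β (z i) - ℓ₁ γ (z i)) - ∫ x, (ℓ₁ β x - ℓ₁ γ x) ∂Q
      ≤ lam₁ / 4 * ∑ j, |γ j - β j|)
    (hproc₂ : w * ∑ i, (ℓ₂ β (z i) - ℓ₂ γ (z i)) - ∫ x, (ℓ₂ β x - ℓ₂ γ x) ∂Q
      ≤ lam₁ / 4 * (∑ j, |γ j - β j| + ε))
    {V : (ι → ℝ) → ℝ} (hV : 0 ≤ V (γ - β)) {a k : ℝ} (ha : 0 < a) (hk : 0 < k)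
    (hmargin : a * V (γ - β) ≤ ∫ x, (ℓ₁ γ x + ℓ₂ γ x) ∂Q - ∫ x, (ℓ₁ β x + ℓ₂ β x) ∂Q)
    (hstabil : Stabil V H 3.5 k (ε / 2)) :
    V (γ - β) ≤ 3.0625 * #H * lam₁ ^ 2 / (a * (a * k + 2 * lam₂))
      + (0.5 * lam₁ / a + 0.5) * ε := by
  refine elasticNet_oracle_inequality (Rₙ := fun b => w * ∑ i, (ℓ₁ b (z i) + ℓ₂ b (z i)))
    (R := fun b => ∫ x, (ℓ₁ b x + ℓ₂ b x) ∂Q) hlam₁ hlam₂ hlam hB hβ ?_ ?_ ha hmargin hV hk hstabil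
  · simpa only [elasticNetPenalty, ← add_assoc] using hmin
  · rw [integral_sub hβ₁ hγ₁] at hproc₁
    rw [integral_sub hβ₂ hγ₂] at hproc₂
    simp only [integral_add hβ₁ hβ₂, integral_add hγ₁ hγ₂, sum_add_distrib]
    simp only [sum_sub_distrib] at hproc₁ hproc₂
    linarith

lemma nbLoss_eq_add (p : ℕ) (θ : ℝ) (β x : Fin p → ℝ) (y : ℝ) :
    nbLoss p θ β x y = nbLoss1 p θ β x y + nbLoss2 p θ β x := by
  unfold nbLoss nbLoss1 nbLoss2
  ring

theorem stmt12
    (n p : ℕ) (hn : 1 ≤ n) (hp : 1 ≤ p)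
    (θ L : ℝ) (hθ : 0 < θ) (hL : 0 < L)
    (Q : Measure ((Fin p → ℝ) × ℝ)) [IsProbabilityMeasure Q]
    (hsupp : ∀ᵐ z ∂Q, (∀ j, |z.1 j| ≤ L) ∧ 0 ≤ z.2)
    (hInt : ∀ β : Fin p → ℝ, Integrable (fun z => nbLoss p θ β z.1 z.2) Q)
    (hInt1 : ∀ β : Fin p → ℝ, Integrable (fun z => nbLoss1 p θ β z.1 z.2) Q)
    (hInt2 : ∀ β : Fin p → ℝ, Integrable (fun z => nbLoss2 p θ β z.1) Q)
    (xs : Fin n → Fin p → ℝ) (ys : Fin n → ℝ)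
    (hxs : ∀ i j, |xs i j| ≤ L) (hys : ∀ i, 0 ≤ ys i)
    (lam1 lam2 : ℝ) (hlam1 : 0 < lam1) (hlam2 : 0 < lam2)
    (betas : Fin p → ℝ)
    (hbetas : ∀ β : Fin p → ℝ,
      ∫ z, nbLoss p θ betas z.1 z.2 ∂Q ≤ ∫ z, nbLoss p θ β z.1 z.2 ∂Q)
    (H : Finset (Fin p)) (hH : H = Finset.univ.filter (fun j => betas j ≠ 0))
    (betah : Fin p → ℝ)
    (hbetah : ∀ β : Fin p → ℝ,
      (1 / (n : ℝ)) * (∑ i, nbLoss p θ betah (xs i) (ys i))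
          + lam1 * ∑ j, |betah j| + lam2 * ∑ j, (betah j) ^ 2
        ≤ (1 / (n : ℝ)) * (∑ i, nbLoss p θ β (xs i) (ys i))
          + lam1 * ∑ j, |β j| + lam2 * ∑ j, (β j) ^ 2)
    (B : ℝ) (hBpos : 0 < B) (hB : ∀ j, |betas j| ≤ B)
    (hlam12 : lam1 = 8 * B * lam2)
    (eps : ℝ) (heps : 0 ≤ eps)
    (hemp1 : (1 / (n : ℝ)) * (∑ i, (nbLoss1 p θ betas (xs i) (ys i)
            - nbLoss1 p θ betah (xs i) (ys i)))
          - ∫ z, (nbLoss1 p θ betas z.1 z.2 - nbLoss1 p θ betah z.1 z.2) ∂Q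
        ≤ lam1 / 4 * ∑ j, |betah j - betas j|)
    (hemp2 : (1 / (n : ℝ)) * (∑ i, (nbLoss2 p θ betas (xs i)
            - nbLoss2 p θ betah (xs i)))
          - ∫ z, (nbLoss2 p θ betas z.1 - nbLoss2 p θ betah z.1) ∂Q
        ≤ lam1 / 4 * ((∑ j, |betah j - betas j|) + eps))
    (a : ℝ) (ha : 0 < a)
    (hquad : ∫ z, nbLoss p θ betah z.1 z.2 ∂Q - ∫ z, nbLoss p θ betas z.1 z.2 ∂Q
        ≥ a * ∫ z, (∑ j, z.1 j * (betah j - betas j)) ^ 2 ∂Q)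
    (k : ℝ) (hk0 : 0 < k) (hk1 : k < 1)
    (hstabil : ∀ b : Fin p → ℝ,
      (∑ j ∈ Hᶜ, |b j|) ≤ 3.5 * (∑ j ∈ H, |b j|) + eps / 2 →
      ∫ z, (∑ j, z.1 j * b j) ^ 2 ∂Q ≥ k * (∑ j ∈ H, (b j) ^ 2) - eps / 2) :
    ∫ z, (∑ j, z.1 j * (betah j - betas j)) ^ 2 ∂Q
      ≤ 17.71875 * (H.card : ℝ) * lam1 ^ 2 / (a * (a * k + 2 * lam2))
        + (4.5 * lam1 / a + 3.5) * eps := by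
  simp only [nbLoss_eq_add] at hbetah hquad
  exact (stmt12_general (z := fun i => (xs i, ys i)) (ℓ₁ := fun β z => nbLoss1 p θ β z.1 z.2)
    (ℓ₂ := fun β z => nbLoss2 p θ β z.1) (V := fun b => ∫ z, (∑ j, z.1 j * b j) ^ 2 ∂Q)
    (hInt1 betas) (hInt1 betah) (hInt2 betas) (hInt2 betah) hlam1 hlam2.le hlam12.ge
    (fun j _ => hB j) (by simp [hH]) (hbetah betas) hemp1 hemp2
    (integral_nonneg fun _ => sq_nonneg _) ha hk0 hquad hstabil).trans (by gcongr <;> norm_num)
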